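/- (Theorem 1, j-integral direction.) Let F : ℝ³ → ℝ and φ, ψ : ℝ² → ℝ satisfy φ(y, F(x,y,z)) = ψ(x,z) for all x,y,z ∈ ℝ; let Ω, Υ : ℝ² → ℝ be a two-sided inverse of (φ, ψ), and suppose that for every y ∈ ℝ the map z ↦ φ(y,z) is injective. Let Φ : ℝⁿ → ℝ be such that the function J : ℝ^{n+1} → ℝ, J(x_0, …, x_n) := Φ(φ(x_0,x_1), φ(x_1,x_2), …, φ(x_{n-1},x_n)), is a j-integral of the quad-graph equation (its value along n+1 consecutive vertical points is unchanged by the unit shift in i, for every solution). Then Φ is a j-integral of order n−1 of the transformed equation (pqd): for every solution V of (pqd) and all i,j ∈ ℤ, Φ(V(i+1,j), V(i+1,j+1), …, V(i+1,j+n−1)) = Φ(V(i,j), V(i,j+1), …, V(i,j+n−1)). -/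

import Mathlib

/-- Theorem 1, j-integral direction: if
`J(x_0,…,x_n) = Φ(φ(x_0,x_1),…,φ(x_{n-1},x_n))` is a `j`-integral of the
quad-graph equation, then `Φ` is a `j`-integral (of order `n-1`) of the
transformed equation (pqd). -/
theorem j_integral_transforms
    (n : ℕ) (F : ℝ → ℝ → ℝ → ℝ) (φ ψ Ω Υ : ℝ → ℝ → ℝ)
    (hinvt : ∀ x y z : ℝ, φ y (F x y z) = ψ x z)
    (hΩ : ∀ w z : ℝ, Ω (φ w z) (ψ w z) = w)
    (hΥ : ∀ w z : ℝ, Υ (φ w z) (ψ w z) = z)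
    (hφ : ∀ a b : ℝ, φ (Ω a b) (Υ a b) = a)
    (hψ : ∀ a b : ℝ, ψ (Ω a b) (Υ a b) = b)
    (hφinj : ∀ y : ℝ, Function.Injective (fun z => φ y z))
    (Φ : (Fin n → ℝ) → ℝ)
    (hJ : ∀ u : ℤ → ℤ → ℝ,
      (∀ i j : ℤ, u (i+1) (j+1) = F (u i j) (u (i+1) j) (u i (j+1))) →
      ∀ i j : ℤ,
        Φ (fun k => φ (u (i+1) (j + ((k : ℕ) : ℤ))) (u (i+1) (j + ((k : ℕ) : ℤ) + 1))) =
        Φ (fun k => φ (u i (j + ((k : ℕ) : ℤ))) (u i (j + ((k : ℕ) : ℤ) + 1)))) :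
    ∀ V : ℤ → ℤ → ℝ,
      (∀ i j : ℤ, Ω (V i (j+1)) (V (i+1) (j+1)) = Υ (V i j) (V (i+1) j)) →
      ∀ i j : ℤ,
        Φ (fun k => V (i+1) (j + ((k : ℕ) : ℤ))) =
        Φ (fun k => V i (j + ((k : ℕ) : ℤ))) := by
  intro V hV i j
  -- `u i j = Ω (V i j) (V (i+1) j)` lifts `V` to the quad-graph equation: (pqd) says that
  -- `u i (j+1) = Υ (V i j) (V (i+1) j)`, so inverting gives `V i j = φ (u i j) (u i (j+1))`.
  have hφu (a b : ℤ) :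
      φ (Ω (V a b) (V (a+1) b)) (Ω (V a (b+1)) (V (a+1) (b+1))) = V a b := by
    rw [hV, hφ]
  have hψu (a b : ℤ) :
      ψ (Ω (V a b) (V (a+1) b)) (Ω (V a (b+1)) (V (a+1) (b+1))) = V (a+1) b := by
    rw [hV, hψ]
  have h := hJ (fun a b => Ω (V a b) (V (a+1) b)) (fun a b => by
    -- both sides have the image `V (a+1) b` under the injective map `φ (u (a+1) b)`
    apply hφinj (Ω (V (a+1) b) (V (a+1+1) b))
    change φ _ _ = φ _ _
    rw [hφu, hinvt, hψu]) i j
  simpa only [hφu] using h
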